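/- (Zero postselection probability for traceless noise.) Let n : ℕ and let l : List (Fin n → Fin 4) be a duplicate-free list containing every a : Fin n → Fin 4. If E is a complex matrix indexed by (Fin n → Fin 2) with trace E = 0, then l.foldl (fun M a => (P_a * M * P_a + M)/2) E = 0. Consequently, for a noise map all of whose Kraus operators are traceless, every Kraus operator of the fully checked map is the zero matrix and the probability of postselecting on all ancilla outcomes 0 is zero. -/

import Mathlib

open Matrix Complex Kronecker

noncomputable def pauli : Fin 4 → Matrix (Fin 2) (Fin 2) ℂ
  | 0 => !![1, 0; 0, 1]
  | 1 => !![0, 1; 1, 0]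
  | 2 => !![0, -Complex.I; Complex.I, 0]
  | 3 => !![1, 0; 0, -1]

noncomputable def PauliString {n : ℕ} (a : Fin n → Fin 4) :
    Matrix (Fin n → Fin 2) (Fin n → Fin 2) ℂ :=
  Matrix.of fun f g => ∏ i, pauli (a i) (f i) (g i)

lemma ps_mul {n : ℕ} (a b : Fin n → Fin 4) (f g : Fin n → Fin 2) :
    (PauliString a * PauliString b) f g = ∏ i, (pauli (a i) * pauli (b i)) (f i) (g i) := by
  simp only [Matrix.mul_apply, PauliString, Matrix.of_apply, ← Finset.prod_mul_distrib]
  rw [Finset.prod_univ_sum]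
  simp

lemma pauli_sq (a : Fin 4) : pauli a * pauli a = 1 := by
  fin_cases a <;> ext i j <;> fin_cases i <;> fin_cases j <;>
    simp [pauli, Matrix.mul_apply]

lemma pauli_comm (a b : Fin 4) : ∃ s : ℂ, s * s = 1 ∧
    ∀ i j, (pauli a * pauli b) i j = s * (pauli b * pauli a) i j := by
  by_cases h : a = 0 ∨ b = 0 ∨ a = b
  · refine ⟨1, by simp, ?_⟩
    rcases h with rfl | rfl | rfl <;> intro i j
    · have : pauli 0 = 1 := by simp [pauli, Matrix.one_fin_two]
      simp [this]
    · have : pauli 0 = 1 := by simp [pauli, Matrix.one_fin_two]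
      simp [this]
    · simp
  · refine ⟨-1, by simp, ?_⟩
    intro i j
    fin_cases a <;> fin_cases b <;> simp at h <;> fin_cases i <;> fin_cases j <;>
      simp [pauli, Matrix.mul_apply]

lemma ps_sq {n : ℕ} (a : Fin n → Fin 4) : PauliString a * PauliString a = 1 := by
  ext f g
  rw [ps_mul]
  simp only [pauli_sq, Matrix.one_apply]
  rw [Finset.prod_ite_zero]
  simp [funext_iff]

lemma ps_comm {n : ℕ} (a b : Fin n → Fin 4) : ∃ s : ℂ, s * s = 1 ∧
    PauliString a * PauliString b = s • (PauliString b * PauliString a) := by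
  choose s hs h using fun i => pauli_comm (a i) (b i)
  refine ⟨∏ i, s i, by simp [← Finset.prod_mul_distrib, hs], ?_⟩
  ext f g
  rw [Matrix.smul_apply, ps_mul, ps_mul, smul_eq_mul, ← Finset.prod_mul_distrib]
  exact Finset.prod_congr rfl fun i _ => h i _ _

/-- One check layer. -/
noncomputable def chk {n : ℕ} (M : Matrix (Fin n → Fin 2) (Fin n → Fin 2) ℂ)
    (a : Fin n → Fin 4) : Matrix (Fin n → Fin 2) (Fin n → Fin 2) ℂ :=
  ((1 : ℂ) / 2) • (PauliString a * M * PauliString a + M)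

lemma chk_trace {n : ℕ} (M : Matrix (Fin n → Fin 2) (Fin n → Fin 2) ℂ)
    (a : Fin n → Fin 4) : (chk M a).trace = M.trace := by
  rw [chk, Matrix.trace_smul, Matrix.trace_add, Matrix.trace_mul_comm, ← mul_assoc, ps_sq, one_mul,
    smul_eq_mul]
  ring

lemma chk_self {n : ℕ} (M : Matrix (Fin n → Fin 2) (Fin n → Fin 2) ℂ)
    (a : Fin n → Fin 4) : PauliString a * chk M a = chk M a * PauliString a := by
  simp only [chk, Matrix.mul_smul, Matrix.smul_mul, mul_add, add_mul]
  rw [mul_assoc _ (PauliString a) (PauliString a), ps_sq, ← mul_assoc, ← mul_assoc, ps_sq, one_mul,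
    mul_one, add_comm]

lemma chk_pres {n : ℕ} (M : Matrix (Fin n → Fin 2) (Fin n → Fin 2) ℂ)
    (a b : Fin n → Fin 4) (h : PauliString a * M = M * PauliString a) :
    PauliString a * chk M b = chk M b * PauliString a := by
  obtain ⟨s, hs, hc⟩ := ps_comm a b
  have key : PauliString a * (PauliString b * M * PauliString b)
      = PauliString b * M * PauliString b * PauliString a := by
    calc _ = PauliString a * PauliString b * M * PauliString b := by simp only [mul_assoc]
      _ = s • (PauliString b * (PauliString a * M) * PauliString b) := by
        rw [hc]; simp only [Matrix.smul_mul, mul_assoc]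
      _ = s • (PauliString b * M * (PauliString a * PauliString b)) := by
        rw [h]; simp only [mul_assoc]
      _ = _ := by
        rw [hc, Matrix.mul_smul, smul_smul, hs, one_smul]; simp only [mul_assoc]
  simp only [chk, Matrix.mul_smul, Matrix.smul_mul, mul_add, add_mul]
  rw [key, h]

lemma fold_trace {n : ℕ} (l : List (Fin n → Fin 4)) :
    ∀ M : Matrix (Fin n → Fin 2) (Fin n → Fin 2) ℂ, (l.foldl chk M).trace = M.trace := by
  induction l with
  | nil => intro M; rfl
  | cons b l ih => intro M; rw [List.foldl_cons, ih, chk_trace]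

lemma fold_pres {n : ℕ} (a : Fin n → Fin 4) (l : List (Fin n → Fin 4)) :
    ∀ M : Matrix (Fin n → Fin 2) (Fin n → Fin 2) ℂ,
      PauliString a * M = M * PauliString a →
      PauliString a * l.foldl chk M = l.foldl chk M * PauliString a := by
  induction l with
  | nil => intro M h; exact h
  | cons b l ih => intro M h; exact ih _ (chk_pres M a b h)

lemma fold_comm {n : ℕ} (a : Fin n → Fin 4) (l : List (Fin n → Fin 4)) (ha : a ∈ l) :
    ∀ M : Matrix (Fin n → Fin 2) (Fin n → Fin 2) ℂ,
      PauliString a * l.foldl chk M = l.foldl chk M * PauliString a := by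
  induction l with
  | nil => simp at ha
  | cons b l ih =>
    intro M
    rcases List.mem_cons.1 ha with rfl | h
    · exact fold_pres a l (chk M a) (chk_self M a)
    · exact ih h _

lemma ps_z {n : ℕ} (i : Fin n) : PauliString (Function.update (fun _ => 0) i 3) =
    Matrix.diagonal (fun f : Fin n → Fin 2 => if f i = 0 then (1 : ℂ) else -1) := by
  have h : ∀ j (x y : Fin 2), pauli (Function.update (fun _ => (0 : Fin 4)) i 3 j) x y =
      if x = y then (if j = i then (if x = 0 then 1 else -1) else 1) else 0 := by
    intro j x y
    by_cases hj : j = i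
    · subst hj
      fin_cases x <;> fin_cases y <;> simp [pauli]
    · fin_cases x <;> fin_cases y <;> simp [pauli, hj]
  ext f g
  simp only [PauliString, Matrix.of_apply, h]
  rw [Finset.prod_ite_zero]
  simp [Matrix.diagonal_apply, funext_iff]

lemma ps_x {n : ℕ} (f g h k : Fin n → Fin 2) :
    PauliString (fun i => if f i = g i then 0 else 1) h k =
      if ∀ i, (f i = g i ↔ h i = k i) then 1 else 0 := by
  have : ∀ x y z w : Fin 2, pauli (if x = y then 0 else 1) z w =
      if (x = y ↔ z = w) then 1 else 0 := by
    intro x y z w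
    by_cases hx : x = y <;> fin_cases z <;> fin_cases w <;> simp [pauli, hx]
  simp only [PauliString, Matrix.of_apply, this]
  rw [Finset.prod_ite_zero]
  simp

lemma comm_zero {n : ℕ} (F : Matrix (Fin n → Fin 2) (Fin n → Fin 2) ℂ)
    (hF : ∀ a, PauliString a * F = F * PauliString a) (ht : F.trace = 0) : F = 0 := by
  have hoff : ∀ f g, f ≠ g → F f g = 0 := by
    intro f g hfg
    obtain ⟨i, hi⟩ := Function.ne_iff.1 hfg
    have h := congrFun (congrFun (hF (Function.update (fun _ => 0) i 3)) f) g
    rw [ps_z, Matrix.diagonal_mul, Matrix.mul_diagonal] at h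
    by_cases h0 : f i = 0
    · have h1 : g i ≠ 0 := fun h => hi (h0.trans h.symm)
      simp only [h0, h1, if_true, if_false] at h
      linear_combination h / 2
    · have h1 : g i = 0 := by omega
      simp only [h0, h1, if_true, if_false] at h
      linear_combination -h / 2
  have hd : ∀ f g, F g g = F f f := by
    intro f g
    have h := congrFun (congrFun (hF (fun i => if f i = g i then 0 else 1)) f) g
    have e1 : ∀ k, (∀ i, (f i = g i ↔ f i = k i)) ↔ k = g := fun k => by
      rw [funext_iff]; exact forall_congr' fun i => by omega
    have e2 : ∀ k, (∀ i, (f i = g i ↔ k i = g i)) ↔ k = f := fun k => by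
      rw [funext_iff]; exact forall_congr' fun i => by omega
    simpa [Matrix.mul_apply, ps_x, e1, e2] using h
  ext f g
  by_cases hfg : f = g
  · subst hfg
    rw [Matrix.trace] at ht
    simp only [Matrix.diag_apply, hd f] at ht
    simpa using ht
  · exact hoff f g hfg

theorem traceless_noise_zero_postselection (n : ℕ) (l : List (Fin n → Fin 4))
    (hnd : l.Nodup) (hmem : ∀ a : Fin n → Fin 4, a ∈ l)
    (E : Matrix (Fin n → Fin 2) (Fin n → Fin 2) ℂ) (hE : Matrix.trace E = 0) :
    l.foldl (fun M a => ((1 : ℂ) / 2) • (PauliString a * M * PauliString a + M)) E = 0 := by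
  exact comm_zero (l.foldl chk E) (fun a => fold_comm a l (hmem a) E)
    ((fold_trace l E).trans hE)
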